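/- Let n ≥ 2 and let f : {0,1}^n → {0,1} be a local rule of width n. If f is (2n−2)-conservative, then f is (2n−3)-conservative. -/

import Mathlib

/-- A local rule `f` of width `n` is `L`-conservative if for every `L`-periodic
bisequence `x : ℤ → Fin 2`, the sum of `f` applied to the `n`-blocks starting at
positions `1,…,L` equals the sum of `x` over positions `1,…,L`. -/
def LCons (n : ℕ) (f : (Fin n → Fin 2) → Fin 2) (L : ℕ) : Prop :=
  ∀ x : ℤ → Fin 2, (∀ i : ℤ, x (i + L) = x i) →
    (∑ i ∈ Finset.range L, (f (fun k => x ((i : ℤ) + 1 + (k : ℕ)))).val) =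
      ∑ i ∈ Finset.range L, (x ((i : ℤ) + 1)).val

/-!
Write `m = n - 1` and let `ψ w = f w - w₀` be the excess of `f` on a block of `m + 1` letters, so
that `f` is `L`-conservative iff `ψ` sums to zero around every cyclic word of length `L`. Apply this
to the cyclic word `w₀ ⋯ wₘ 0^(m-1)` of length `2m`. Every block read from it also occurs in
`⋯ 0 0 w₀ ⋯ wₘ 0 0 ⋯`, except for the block `wₘ 0^(m-1) w₀`. Over a binary alphabet, `ψ` splits on
that block as `ψ (wₘ 0^m) + ψ (0^m w₀)`, as is seen by taking `w = 1 0^(m-1) 1`. So `ψ` sums to zero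
along `⋯ 0 0 w₀ ⋯ wₘ 0 0 ⋯`. Comparing this for `w₀ ⋯ wₘ` and for `w₁ ⋯ wₘ 0` writes `ψ (w₀ ⋯ wₘ)`
as the difference of a function of `w₁ ⋯ wₘ` and the same function of `w₀ ⋯ wₘ₋₁`. Such a
difference telescopes to zero around cyclic words of every length.
-/

open Finset

section BlockSums

variable {A M : Type*} [AddCommGroup M] {m : ℕ}

/-- The block `w r, …, w (r + m)` of the word `w`. -/
def window (m : ℕ) (w : ℕ → A) (r : ℕ) : Fin (m + 1) → A := fun k => w (r + k)

/-- The block function `ψ` sums to zero around every cyclic word of length `L`; the cyclic word is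
given by the first `L` letters of `w`. -/
def HasZeroCyclicSums (ψ : (Fin (m + 1) → A) → M) (L : ℕ) : Prop :=
  ∀ w : ℕ → A, ∑ r ∈ range L, ψ (window m (fun i => w (i % L)) r) = 0

lemma window_mod_two_mul {r : ℕ} (hr : r < m) (w : ℕ → A) :
    window m (fun i => w (i % (2 * m))) r = window m w r := by
  ext k
  simp only [window, Nat.mod_eq_of_lt (show r + k < 2 * m by omega)]

lemma window_mod_two_mul_add_apply {s : ℕ} (hs : s < m) (w : ℕ → A) (k : Fin (m + 1)) :
    window m (fun i => w (i % (2 * m))) (m + s) k =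
      if s + k < m then w (m + s + k) else w (s + k - m) := by
  split_ifs with hk
  · simp only [window, Nat.mod_eq_of_lt (show m + s + k < 2 * m by omega)]
  · have index_eq : m + s + k = s + k - m + 2 * m := by omega
    simp only [window, index_eq, Nat.add_mod_right,
      Nat.mod_eq_of_lt (show s + k - m < 2 * m by omega)]

variable [Zero A]

/-- The block `0, …, 0, w 0, …, w s` of `m + 1` letters, for `s ≤ m`. -/
def paddedPrefix (m : ℕ) (w : ℕ → A) (s : ℕ) : Fin (m + 1) → A :=
  fun k => if s + k < m then 0 else w (s + k - m)

/-- The block `a, 0, …, 0, b` of `m + 1` letters, for `0 < m`. -/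
def endpointBlock (m : ℕ) (a b : A) : Fin (m + 1) → A :=
  fun k => if (k : ℕ) = 0 then a else if (k : ℕ) = m then b else 0

/-- The current through the left end of the word `w`: the total of `ψ` over the blocks which start
before `w 0` and end in one of `w 0, …, w (m - 1)`, all letters before `w 0` being zero. -/
def current (ψ : (Fin (m + 1) → A) → M) (w : ℕ → A) : M :=
  ∑ s ∈ range m, ψ (paddedPrefix m w s)

lemma endpointBlock_zero_zero : endpointBlock m (0 : A) 0 = 0 := by
  ext k
  simp [endpointBlock]

lemma window_self_eq_endpointBlock {w : ℕ → A} (hw : ∀ i > m, w i = 0) :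
    window m w m = endpointBlock m (w m) 0 := by
  ext k
  grind [window, endpointBlock]

lemma paddedPrefix_zero_eq_endpointBlock (hm : 0 < m) (w : ℕ → A) :
    paddedPrefix m w 0 = endpointBlock m 0 (w 0) := by
  ext k
  grind [paddedPrefix, endpointBlock]

lemma current_congr (ψ : (Fin (m + 1) → A) → M) {v w : ℕ → A} (h : ∀ i < m, v i = w i) :
    current ψ v = current ψ w := by
  refine sum_congr rfl fun s hs => congrArg ψ ?_
  ext k
  grind [paddedPrefix]

namespace HasZeroCyclicSums

variable {ψ : (Fin (m + 1) → A) → M}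

lemma map_zero [IsAddTorsionFree M] {L : ℕ} (hψ : HasZeroCyclicSums ψ L) (hL : L ≠ 0) :
    ψ 0 = 0 := by
  have h : L • ψ 0 = 0 := calc
    L • ψ 0 = ∑ _r ∈ range L, ψ 0 := by rw [sum_const, card_range]
    _ = 0 := hψ 0
  exact (smul_eq_zero_iff_right hL).1 h

lemma sum_window_add_sum_paddedPrefix (hm : 0 < m) (hψ : HasZeroCyclicSums ψ (2 * m))
    {w : ℕ → A} (hw : ∀ i > m, w i = 0) :
    ∑ r ∈ range m, ψ (window m w r) +
      (ψ (endpointBlock m (w m) (w 0)) + ∑ s ∈ Ico 1 m, ψ (paddedPrefix m w s)) = 0 := by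
  have wrapped_zero : window m (fun i => w (i % (2 * m))) (m + 0) =
      endpointBlock m (w m) (w 0) := by
    ext k
    rw [window_mod_two_mul_add_apply hm]
    grind [endpointBlock]
  have wrapped_pos : ∀ s ∈ Ico 1 m, window m (fun i => w (i % (2 * m))) (m + s) =
      paddedPrefix m w s := by
    intro s hs
    ext k
    rw [window_mod_two_mul_add_apply (mem_Ico.1 hs).2]
    grind [paddedPrefix]
  have total := hψ w
  rwa [two_mul m, sum_range_add, ← two_mul m,
    sum_congr rfl fun r hr => congrArg ψ (window_mod_two_mul (mem_range.1 hr) w),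
    sum_range_eq_add_Ico (fun s => ψ (window m _ (m + s))) hm, wrapped_zero,
    sum_congr rfl fun s hs => congrArg ψ (wrapped_pos s hs)] at total

lemma endpointBlock_add_endpointBlock_swap (hm : 0 < m) (hψ : HasZeroCyclicSums ψ (2 * m))
    (hψ₀ : ψ 0 = 0) (a b : A) :
    ψ (endpointBlock m a b) + ψ (endpointBlock m b a) =
      (ψ (endpointBlock m a 0) + ψ (endpointBlock m 0 a)) +
        (ψ (endpointBlock m b 0) + ψ (endpointBlock m 0 b)) := by
  -- The sum over the cyclic word `a 0^(m-1) b 0^(m-1)` is `ψ (a 0^(m-1) b) + ψ (b 0^(m-1) a)` plus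
  -- terms depending on only one of `a` and `b`.
  let innerSum (c : A) : M := ∑ r ∈ Ico 1 m, ψ (fun k => if r + (k : ℕ) = m then c else 0)
  have innerSum_zero : innerSum 0 = 0 :=
    sum_eq_zero fun r _ => by simpa using! hψ₀
  have total (a b : A) : ψ (endpointBlock m a b) + innerSum b +
      (ψ (endpointBlock m b a) + innerSum a) = 0 := by
    let w : ℕ → A := fun i => if i = 0 then a else if i = m then b else 0
    have window_zero : window m w 0 = endpointBlock m a b := by
      ext k
      simp [window, w, endpointBlock]
    have window_pos : ∀ r ∈ Ico 1 m,
        window m w r = fun k : Fin (m + 1) => if r + (k : ℕ) = m then b else 0 := by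
      intro r hr
      ext k
      grind [window]
    have padded_pos : ∀ s ∈ Ico 1 m,
        paddedPrefix m w s = fun k : Fin (m + 1) => if s + (k : ℕ) = m then a else 0 := by
      intro s hs
      ext k
      grind [paddedPrefix]
    have cyclic := hψ.sum_window_add_sum_paddedPrefix hm (w := w) (by grind)
    rwa [sum_range_eq_add_Ico _ hm, window_zero,
      sum_congr rfl fun r hr => congrArg ψ (window_pos r hr),
      sum_congr rfl fun s hs => congrArg ψ (padded_pos s hs),
      show w m = b by grind, show w 0 = a by grind] at cyclic
  have total_ab := total a b
  have total_a := total a 0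
  have total_b := total b 0
  rw [innerSum_zero] at total_a total_b
  grind

lemma sum_window_add_current (hm : 0 < m) (hψ : HasZeroCyclicSums ψ (2 * m))
    (hadd : ∀ a b, ψ (endpointBlock m a b) = ψ (endpointBlock m a 0) + ψ (endpointBlock m 0 b))
    {w : ℕ → A} (hw : ∀ i > m, w i = 0) :
    ∑ r ∈ range (m + 1), ψ (window m w r) + current ψ w = 0 := by
  rw [current, sum_range_succ, sum_range_eq_add_Ico (fun s => ψ (paddedPrefix m w s)) hm,
    window_self_eq_endpointBlock hw, paddedPrefix_zero_eq_endpointBlock hm, add_assoc,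
    ← add_assoc (ψ _) (ψ _), ← hadd]
  exact hψ.sum_window_add_sum_paddedPrefix hm hw

lemma window_zero_eq_current_sub_current (hm : 0 < m) (hψ : HasZeroCyclicSums ψ (2 * m))
    (hadd : ∀ a b, ψ (endpointBlock m a b) = ψ (endpointBlock m a 0) + ψ (endpointBlock m 0 b))
    (w : ℕ → A) :
    ψ (window m w 0) = current ψ (fun i => w (i + 1)) - current ψ w := by
  have hψ₀ : ψ 0 = 0 := by simpa [endpointBlock_zero_zero] using hadd 0 0
  let u : ℕ → A := fun i => if i ≤ m then w i else 0
  let v : ℕ → A := fun i => u (i + 1)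
  have window_u : window m u 0 = window m w 0 := by
    ext k
    grind [window]
  have window_v : window m v m = 0 := by
    ext k
    have : ¬ m + k + 1 ≤ m := by omega
    simp only [window, v, u, if_neg this, Pi.zero_apply]
  have window_shift (r : ℕ) : window m u (r + 1) = window m v r := by
    ext k
    grind [window]
  have sum_u := hψ.sum_window_add_current hm hadd (w := u) (by grind)
  have sum_v := hψ.sum_window_add_current hm hadd (w := v) (by grind)
  rw [sum_range_succ', window_u, current_congr ψ (w := w) (by grind)] at sum_u
  rw [sum_range_succ, window_v, hψ₀,
    current_congr ψ (w := fun i => w (i + 1)) (by grind)] at sum_v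
  simp only [window_shift] at sum_u
  grind

theorem of_two_mul (hm : 0 < m) (hψ : HasZeroCyclicSums ψ (2 * m))
    (hadd : ∀ a b, ψ (endpointBlock m a b) = ψ (endpointBlock m a 0) + ψ (endpointBlock m 0 b))
    (L : ℕ) : HasZeroCyclicSums ψ L := by
  intro w
  let θ (r : ℕ) : M := current ψ fun i => w ((r + i) % L)
  calc ∑ r ∈ range L, ψ (window m (fun i => w (i % L)) r)
      = ∑ r ∈ range L, (θ (r + 1) - θ r) := by
        refine sum_congr rfl fun r _ => ?_
        have window_shift : window m (fun i => w (i % L)) r =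
            window m (fun i => w ((r + i) % L)) 0 := by
          ext k
          simp only [window, zero_add]
        rw [window_shift, hψ.window_zero_eq_current_sub_current hm hadd]
        simp only [θ, add_assoc, add_comm 1]
    _ = θ L - θ 0 := sum_range_sub θ L
    _ = 0 := by simp [θ]

end HasZeroCyclicSums

lemma HasZeroCyclicSums.endpointBlock_eq_add [IsAddTorsionFree M] {ψ : (Fin (m + 1) → Fin 2) → M}
    (hm : 0 < m) (hψ : HasZeroCyclicSums ψ (2 * m)) (a b : Fin 2) :
    ψ (endpointBlock m a b) = ψ (endpointBlock m a 0) + ψ (endpointBlock m 0 b) := by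
  have hψ₀ : ψ (endpointBlock m 0 0) = 0 := by
    rw [endpointBlock_zero_zero, hψ.map_zero (by omega)]
  -- For `a = b = 1`, the symmetrized identity is twice the asserted one.
  have diagonal : ψ (endpointBlock m 1 1) = ψ (endpointBlock m 1 0) + ψ (endpointBlock m 0 1) := by
    refine nsmul_right_injective two_ne_zero ?_
    simpa only [two_nsmul] using
      hψ.endpointBlock_add_endpointBlock_swap hm (hψ.map_zero (by omega)) 1 1
  fin_cases a <;> fin_cases b <;> simp [hψ₀, diagonal]

end BlockSums

/-- The amount by which the local rule `f` exceeds the first letter of a block. -/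
def excess {m : ℕ} (f : (Fin (m + 1) → Fin 2) → Fin 2) (w : Fin (m + 1) → Fin 2) : ℤ :=
  (f w).val - (w 0).val

lemma sum_excess_window_eq_zero_iff {m : ℕ} (f : (Fin (m + 1) → Fin 2) → Fin 2) (w : ℕ → Fin 2)
    (L : ℕ) :
    ∑ r ∈ range L, excess f (window m w r) = 0 ↔
      ∑ r ∈ range L, (f (window m w r)).val = ∑ r ∈ range L, (w r).val := by
  simp only [excess, sum_sub_distrib, sub_eq_zero, window, Fin.val_zero, add_zero]
  exact_mod_cast Iff.rfl

lemma lCons_iff_hasZeroCyclicSums {m : ℕ} (f : (Fin (m + 1) → Fin 2) → Fin 2) (L : ℕ) :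
    LCons (m + 1) f L ↔ HasZeroCyclicSums (excess f) L := by
  have sum_iff (x : ℤ → Fin 2) (w : ℕ → Fin 2) (hxw : ∀ i : ℕ, x (i + 1) = w (i % L)) :
      (∑ i ∈ range L, (f fun k => x ((i : ℤ) + 1 + (k : ℕ))).val =
        ∑ i ∈ range L, (x ((i : ℤ) + 1)).val) ↔
      ∑ r ∈ range L, excess f (window m (fun i => w (i % L)) r) = 0 := by
    have block (i : ℕ) : (fun k : Fin (m + 1) => x ((i : ℤ) + 1 + (k : ℕ))) =
        window m (fun i => w (i % L)) i := by
      ext1 k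
      simp only [window, ← hxw, Nat.cast_add, add_right_comm]
    simp only [sum_excess_window_eq_zero_iff, block, hxw]
  constructor
  · intro hf w
    let x : ℤ → Fin 2 := fun i => w ((i - 1) % L).toNat
    refine (sum_iff x w fun i => ?_).1 (hf x fun i => ?_)
    · simp only [x, add_sub_cancel_right, ← Int.natCast_mod, Int.toNat_natCast]
    · simp only [x, add_sub_right_comm, Int.add_emod_right]
  · intro hf x hx
    let w : ℕ → Fin 2 := fun i => x (i + 1)
    have w_periodic : Function.Periodic w L := fun i => by
      simp only [w, Nat.cast_add, add_right_comm _ (L : ℤ), hx]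
    exact (sum_iff x w fun i => (w_periodic.map_mod_nat i).symm).2 (hf w)

theorem stmt_1_general (n : ℕ) (hn : 2 ≤ n) (f : (Fin n → Fin 2) → Fin 2)
    (h : LCons n f (2 * n - 2)) (L : ℕ) : LCons n f L := by
  obtain ⟨m, rfl⟩ : ∃ m, n = m + 1 := ⟨n - 1, by omega⟩
  have hm : 0 < m := by omega
  rw [show 2 * (m + 1) - 2 = 2 * m by omega, lCons_iff_hasZeroCyclicSums] at h
  rw [lCons_iff_hasZeroCyclicSums]
  exact h.of_two_mul hm (h.endpointBlock_eq_add hm) L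

/-- If a local rule of width `n ≥ 2` is `(2n-2)`-conservative, then it is
`(2n-3)`-conservative. -/
theorem stmt_1 (n : ℕ) (hn : 2 ≤ n) (f : (Fin n → Fin 2) → Fin 2)
    (h : LCons n f (2 * n - 2)) :
    LCons n f (2 * n - 3) :=
  stmt_1_general n hn f h (2 * n - 3)
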